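/- arXiv:2410.04532 — 2 statements merged into one kernel-verified Lean document; each statement's English description precedes it below -/
import Mathlib

section
/- Define r* = 5(√2 − 1), and for real r set Z_i(r) = (1/26)( −√(9r² − 20r + 92) + 3r − 38 ) and Z_⋆(r) = −(1 + 2√2) r / 5. Then Z_i(r*) = Z_⋆(r*), and there exists ε > 0 such that for all r with r* − ε < r < r*: Z_i(r) < Z_⋆(r) < 0. -/
noncomputable section

/-- The critical self-similarity exponent `r* = 5(√2 − 1)`. -/
def rstar : ℝ := 5 * (Real.sqrt 2 - 1)

/-- `Z_i(r) = (1/26)(−√(9r² − 20r + 92) + 3r − 38)`, the `Z`-coordinate of the intersection of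
the branch of `N_W = 0` with the line `D_Z = 0`. -/
def Zi (r : ℝ) : ℝ := (1 / 26) * (-Real.sqrt (9 * r ^ 2 - 20 * r + 92) + 3 * r - 38)

/-- `Z_⋆(r) = −(1 + 2√2)r/5`, the `Z`-coordinate of `P_⋆`. -/
def Zstar (r : ℝ) : ℝ := -(1 + 2 * Real.sqrt 2) * r / 5

/-- `Z_i(r*) = Z_⋆(r*)`, and `Z_i(r) < Z_⋆(r) < 0` for `r` sufficiently close to
`r*` from below. -/
theorem stmt15 :
    Zi rstar = Zstar rstar ∧
    ∃ ε : ℝ, 0 < ε ∧ ∀ r : ℝ, rstar - ε < r → r < rstar → Zi r < Zstar r ∧ Zstar r < 0 := by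
  have hs2 : Real.sqrt 2 ^ 2 = 2 := Real.sq_sqrt (by norm_num)
  have hlo : (1.414 : ℝ) < Real.sqrt 2 := Real.lt_sqrt_of_sq_lt (by norm_num)
  have hhi : Real.sqrt 2 < 1.415 := by
    rw [Real.sqrt_lt' (by norm_num)]; norm_num
  unfold Zi Zstar rstar
  generalize Real.sqrt 2 = s at *
  refine ⟨?_, 1 / 2, by norm_num, ?_⟩
  · have h : Real.sqrt (9 * (5 * (s - 1)) ^ 2 - 20 * (5 * (s - 1)) + 92) = 25 - 11 * s := by
      rw [Real.sqrt_eq_iff_mul_self_eq_of_pos (by linarith)]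
      linear_combination (-104) * hs2
    rw [h]
    linear_combination 2 * hs2
  · intro r h1 h2
    have hr : 0 < r := by linarith
    constructor
    · have key : (3 * r - 38 + 26 * (1 + 2 * s) * r / 5) <
          Real.sqrt (9 * r ^ 2 - 20 * r + 92) := by
        apply Real.lt_sqrt_of_sq_lt
        have hf : (9 - (7089 + 4264 * s) / 25) * r + 1352 * (s + 1) / 5 < 0 := by
          nlinarith
        have hp := mul_pos_of_neg_of_neg (show r - 5 * (s - 1) < 0 by linarith) hf
        have e : 9 * r ^ 2 - 20 * r + 92 - (3 * r - 38 + 26 * (1 + 2 * s) * r / 5) ^ 2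
            = (r - 5 * (s - 1)) *
              ((9 - (7089 + 4264 * s) / 25) * r + 1352 * (s + 1) / 5) := by
          linear_combination (-(2704 / 25) * r ^ 2 - 4264 / 5 * r + 1352) * hs2
        linarith
      linarith
    · have : 0 < (1 + 2 * s) * r := by positivity
      linarith
end
end

section
/- Define Ξ₁(W,Z) = D_W(W,Z)²·D_Z(W,Z) + (1/4)( N_W(W,Z)·D_Z(W,Z) − N_Z(W,Z)·D_W(W,Z) ), and for real r set ℛ₁ = √(r² − 44r + 92), W₀ = (−3r + 3ℛ₁ + 10)/14, Z₀ = (r − ℛ₁ − 22)/14. Then there exists ε > 0 such that for every r with r* − ε < r < r*, where r* = 5(√2 − 1), and for every real Z > Z₀: Ξ₁(W₀, Z) > 0. -/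
noncomputable section

/-- `ℛ₁ = √(r² − 44r + 92)`. -/
def R1 (r : ℝ) : ℝ := Real.sqrt (r ^ 2 - 44 * r + 92)

/-- `W₀`, the `W`-coordinate of the sonic point `P_s`. -/
def W0 (r : ℝ) : ℝ := (-3 * r + 3 * R1 r + 10) / 14

/-- `Z₀`, the `Z`-coordinate of the sonic point `P_s`. -/
def Z0 (r : ℝ) : ℝ := (r - R1 r - 22) / 14

/-- `D_W(W,Z) = 1 + (3/4)W + (1/4)Z`. -/
def DW (W Z : ℝ) : ℝ := 1 + (3 / 4) * W + (1 / 4) * Z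

/-- `D_Z(W,Z) = 1 + (1/4)W + (3/4)Z`. -/
def DZ (W Z : ℝ) : ℝ := 1 + (1 / 4) * W + (3 / 4) * Z

/-- `N_W(W,Z) = −rW − (13/8)W² − (1/4)WZ + (7/8)Z²`. -/
def NW (r W Z : ℝ) : ℝ := -r * W - (13 / 8) * W ^ 2 - (1 / 4) * W * Z + (7 / 8) * Z ^ 2

/-- `N_Z(W,Z) = −rZ + (7/8)W² − (1/4)WZ − (13/8)Z²`. -/
def NZ (r W Z : ℝ) : ℝ := -r * Z + (7 / 8) * W ^ 2 - (1 / 4) * W * Z - (13 / 8) * Z ^ 2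

/-- `Ξ₁ = D_W²·D_Z + (1/4)(N_W·D_Z − N_Z·D_W)`. -/
def Xi1 (r W Z : ℝ) : ℝ :=
  DW W Z ^ 2 * DZ W Z + (1 / 4) * (NW r W Z * DZ W Z - NZ r W Z * DW W Z)

/-- for `r` sufficiently close to `r*` from below, `Ξ₁(W₀, Z) > 0` for all
`Z > Z₀`. -/
theorem stmt17 : ∃ ε : ℝ, 0 < ε ∧ ∀ r : ℝ, rstar - ε < r → r < rstar →
    ∀ Z : ℝ, Z0 r < Z → 0 < Xi1 r (W0 r) Z := by
  have h2 : (1.414 : ℝ) < Real.sqrt 2 := Real.lt_sqrt_of_sq_lt (by norm_num)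
  have h2' : Real.sqrt 2 < 1.4144 := by
    rw [Real.sqrt_lt' (by norm_num)]; norm_num
  refine ⟨0.01, by norm_num, ?_⟩
  intro r hr1 hr2 Z hZ
  unfold rstar at hr1 hr2
  have hlo : 2.05 < r := by linarith
  have hhi : r < 2.072 := by linarith
  have hpos : 4 < r ^ 2 - 44 * r + 92 := by nlinarith
  have hlt : r ^ 2 - 44 * r + 92 < 9 := by nlinarith
  have hs : R1 r ^ 2 = r ^ 2 - 44 * r + 92 := Real.sq_sqrt (by linarith)
  have hs1 : 2 < R1 r := Real.lt_sqrt_of_sq_lt (by linarith)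
  have hs2 : R1 r < 3 := by
    unfold R1
    rw [Real.sqrt_lt' (by norm_num)]; linarith
  have hz : Z0 r = (r - R1 r - 22) / 14 := rfl
  have hW : W0 r = -4 - 3 * Z0 r := by
    unfold W0 Z0; ring
  rw [hW]
  generalize Z0 r = z at *
  have hR : R1 r = r - 22 - 14 * z := by linarith
  rw [hR] at hs
  have h : 7 * z ^ 2 - r * z + 22 * z + 14 = 0 := by linarith
  have hz1 : z < -1.5 := by linarith
  have hz2 : -1.7 < z := by linarith
  have key : Xi1 r (-4 - 3 * z) Z = (Z - z) * ((1 / 4) * (r - z * (z + 2) - 2)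
      + (1 / 16) * (r - 15 * z - 23) * (Z - z) + (5 / 16) * (Z - z) ^ 2) := by
    unfold Xi1 DW DZ NW NZ
    linear_combination (-(Z - z) / 16 - (1 / 4) * (-2 - 9 / 4 * z + Z / 4)) * h
  rw [key]
  have hd : 0 < Z - z := by linarith
  have hA : 0 < r - z * (z + 2) - 2 := by nlinarith
  have hB : 0 < r - 15 * z - 23 := by linarith
  positivity
end
end
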